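/- arXiv:1911.09890 — 7 statements merged into one kernel-verified Lean document; each statement's English description precedes it below -/
import Mathlib

section
/- Let S be a finite set, x ∈ ℝ^S, p : 2^S → ℤ supermodular and b : 2^S → ℤ submodular with p(∅)=b(∅)=0 satisfying the cross-inequality b(X) − p(Y) ≥ b(X∖Y) − p(Y∖X) for all X,Y ⊆ S, and suppose p(Y) ≤ x(Y) ≤ b(Y) for all Y ⊆ S. Let 𝒯^p = {Y ⊆ S : x(Y) = p(Y)} and 𝒯^b = {Y ⊆ S : x(Y) = b(Y)} be the collections of p-tight and b-tight sets. If 𝓛 ⊆ 𝒯^p ∪ 𝒯^b is a maximal independent laminar system in 𝒯^p ∪ 𝒯^b, then span({χ_Z : Z ∈ 𝓛}) = span({χ_Z : Z ∈ 𝒯^p ∪ 𝒯^b}), where χ_Z ∈ ℝ^S denotes the characteristic vector of Z and span means the real linear span. -/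
/-- The characteristic vector `χ_Z ∈ ℝ^S` of a finite set `Z ⊆ S`. -/
def chiVec {S : Type*} [DecidableEq S] (Z : Finset S) : S → ℝ :=
  fun s => if s ∈ Z then 1 else 0

/-- A collection of subsets of `S` is laminar if any two members are nested or disjoint. -/
def IsLaminar {S : Type*} (L : Set (Finset S)) : Prop :=
  ∀ X ∈ L, ∀ Y ∈ L, X ⊆ Y ∨ Y ⊆ X ∨ Disjoint X Y

/-- An independent laminar system: laminar, and the characteristic vectors of its members
are linearly independent over `ℝ`. -/
def IsIndepLaminar {S : Type*} [DecidableEq S] (L : Set (Finset S)) : Prop :=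
  IsLaminar L ∧ LinearIndependent ℝ (fun Z : L => chiVec (Z : Finset S))


def Crs {S : Type*} [DecidableEq S] (W Y : Finset S) : Prop :=
  ¬ (W ⊆ Y ∨ Y ⊆ W ∨ Disjoint W Y)

lemma crs_iff {S : Type*} [DecidableEq S] (W Y : Finset S) :
    Crs W Y ↔ (∃ a ∈ W, a ∉ Y) ∧ (∃ a ∈ Y, a ∉ W) ∧ ∃ a ∈ W, a ∈ Y := by
  unfold Crs
  rw [Finset.disjoint_left]
  simp only [Finset.subset_iff]
  push Not
  rfl

lemma crs_inter {S : Type*} [DecidableEq S] {W Y Z : Finset S}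
    (h : W ⊆ Z ∨ Z ⊆ W ∨ Disjoint W Z) (_hc : Crs Z Y) (hw : Crs W (Y ∩ Z)) : Crs W Y := by
  rw [crs_iff] at *
  rw [Finset.disjoint_left] at h
  simp only [Finset.subset_iff, Finset.mem_inter] at *
  grind

lemma crs_union {S : Type*} [DecidableEq S] {W Y Z : Finset S}
    (h : W ⊆ Z ∨ Z ⊆ W ∨ Disjoint W Z) (hc : Crs Z Y) (hw : Crs W (Y ∪ Z)) : Crs W Y := by
  rw [crs_iff] at *
  rw [Finset.disjoint_left] at h
  simp only [Finset.subset_iff, Finset.mem_union] at *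
  grind

lemma crs_sdiff {S : Type*} [DecidableEq S] {W Y Z : Finset S}
    (h : W ⊆ Z ∨ Z ⊆ W ∨ Disjoint W Z) (hc : Crs Z Y) (hw : Crs W (Y \ Z)) : Crs W Y := by
  rw [crs_iff] at *
  rw [Finset.disjoint_left] at h
  simp only [Finset.subset_iff, Finset.mem_sdiff] at *
  grind

lemma crs_sdiff2 {S : Type*} [DecidableEq S] {W Y Z : Finset S}
    (h : W ⊆ Z ∨ Z ⊆ W ∨ Disjoint W Z) (hc : Crs Z Y) (hw : Crs W (Z \ Y)) : Crs W Y := by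
  rw [crs_iff] at *
  rw [Finset.disjoint_left] at h
  simp only [Finset.subset_iff, Finset.mem_sdiff] at *
  grind

/-- **Claim 7 (uncrossing claim).** Let `(p,b)` satisfy `p(∅)=b(∅)=0`, `p` supermodular,
`b` submodular and the cross-inequality, and let `x` satisfy `p(Y) ≤ x(Y) ≤ b(Y)` for all
`Y ⊆ S`. If `𝓛` is a maximal independent laminar system inside the family of `p`-tight and
`b`-tight sets, then the span of the characteristic vectors of `𝓛` equals the span of the
characteristic vectors of all tight sets. -/
theorem uncrossing_claim
    {S : Type*} [Fintype S] [DecidableEq S]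
    (p b : Finset S → ℤ)
    (hp0 : p ∅ = 0) (hb0 : b ∅ = 0)
    (hsuper : ∀ X Y : Finset S, p X + p Y ≤ p (X ∩ Y) + p (X ∪ Y))
    (hsub : ∀ X Y : Finset S, b (X ∩ Y) + b (X ∪ Y) ≤ b X + b Y)
    (hcross : ∀ X Y : Finset S, b (X \ Y) - p (Y \ X) ≤ b X - p Y)
    (x : S → ℝ)
    (hxp : ∀ Y : Finset S, (p Y : ℝ) ≤ ∑ s ∈ Y, x s)
    (hxb : ∀ Y : Finset S, ∑ s ∈ Y, x s ≤ (b Y : ℝ))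
    (Tp Tb : Set (Finset S))
    (hTp : Tp = {Y : Finset S | ∑ s ∈ Y, x s = (p Y : ℝ)})
    (hTb : Tb = {Y : Finset S | ∑ s ∈ Y, x s = (b Y : ℝ)})
    (L : Set (Finset S))
    (hLsub : L ⊆ Tp ∪ Tb)
    (hL : IsIndepLaminar L)
    (hLmax : ∀ Y ∈ Tp ∪ Tb, Y ∉ L → ¬ IsIndepLaminar (L ∪ {Y})) :
    Submodule.span ℝ (chiVec '' L) = Submodule.span ℝ (chiVec '' (Tp ∪ Tb)) := by
  have hmodr : ∀ Y Z : Finset S, ∑ s ∈ Y ∪ Z, x s + ∑ s ∈ Y ∩ Z, x s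
      = ∑ s ∈ Y, x s + ∑ s ∈ Z, x s := fun Y Z => Finset.sum_union_inter
  have hmodd : ∀ Y Z : Finset S, ∑ s ∈ Y ∩ Z, x s + ∑ s ∈ Y \ Z, x s
      = ∑ s ∈ Y, x s := fun Y Z => Finset.sum_inter_add_sum_sdiff Y Z x
  have hP : ∀ Y, Y ∈ Tp ↔ ∑ s ∈ Y, x s = (p Y : ℝ) := by intro Y; rw [hTp]; rfl
  have hB : ∀ Y, Y ∈ Tb ↔ ∑ s ∈ Y, x s = (b Y : ℝ) := by intro Y; rw [hTb]; rfl
  have hpp : ∀ Y Z, Y ∈ Tp → Z ∈ Tp → Y ∩ Z ∈ Tp ∧ Y ∪ Z ∈ Tp := by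
    intro Y Z hY hZ
    rw [hP] at *
    rw [hP]
    have h1 : (p Y : ℝ) + p Z ≤ p (Y ∩ Z) + p (Y ∪ Z) := by exact_mod_cast hsuper Y Z
    have := hmodr Y Z
    have := hxp (Y ∩ Z)
    have := hxp (Y ∪ Z)
    constructor <;> linarith
  have hbb : ∀ Y Z, Y ∈ Tb → Z ∈ Tb → Y ∩ Z ∈ Tb ∧ Y ∪ Z ∈ Tb := by
    intro Y Z hY hZ
    rw [hB] at *
    rw [hB]
    have h1 : (b (Y ∩ Z) : ℝ) + b (Y ∪ Z) ≤ b Y + b Z := by exact_mod_cast hsub Y Z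
    have := hmodr Y Z
    have := hxb (Y ∩ Z)
    have := hxb (Y ∪ Z)
    constructor <;> linarith
  have hbp : ∀ Y Z, Y ∈ Tb → Z ∈ Tp → Y \ Z ∈ Tb ∧ Z \ Y ∈ Tp := by
    intro Y Z hY hZ
    rw [hP] at *
    rw [hB] at *
    have h1 : (b (Y \ Z) : ℝ) - p (Z \ Y) ≤ b Y - p Z := by exact_mod_cast hcross Y Z
    have := hmodd Y Z
    have h2 := hmodd Z Y
    rw [Finset.inter_comm] at h2
    have := hxb (Y \ Z)
    have := hxp (Z \ Y)
    constructor <;> linarith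
  have key : ∀ n : ℕ, ∀ Y ∈ Tp ∪ Tb, {W ∈ L | Crs W Y}.ncard = n →
      chiVec Y ∈ Submodule.span ℝ (chiVec '' L) := by
    intro n
    induction n using Nat.strong_induction_on with
    | _ n ih =>
    intro Y hY hn
    by_cases hex : ∃ Z ∈ L, Crs Z Y
    · obtain ⟨Z, hZ, hZY⟩ := hex
      have hZs : chiVec Z ∈ Submodule.span ℝ (chiVec '' L) :=
        Submodule.subset_span ⟨Z, hZ, rfl⟩
      have step : ∀ Y' ∈ Tp ∪ Tb, (∀ W, (W ⊆ Z ∨ Z ⊆ W ∨ Disjoint W Z) → Crs W Y' → Crs W Y) →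
          ¬ Crs Z Y' → chiVec Y' ∈ Submodule.span ℝ (chiVec '' L) := by
        intro Y' hY' h1 h2
        refine ih _ ?_ Y' hY' rfl
        rw [← hn]
        apply Set.ncard_lt_ncard _ (Set.toFinite _)
        refine ⟨fun W hW => ⟨hW.1, h1 W (hL.1 W hW.1 Z hZ) hW.2⟩, fun h => ?_⟩
        exact h2 (h (show Z ∈ {W ∈ L | Crs W Y} from ⟨hZ, hZY⟩)).2
      have same : Y ∩ Z ∈ Tp ∪ Tb → Y ∪ Z ∈ Tp ∪ Tb →
          chiVec Y ∈ Submodule.span ℝ (chiVec '' L) := by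
        intro h1 h2
        have a1 := step _ h1 (fun W h hw => crs_inter h hZY hw)
          (fun h => h (Or.inr (Or.inl Finset.inter_subset_right)))
        have a2 := step _ h2 (fun W h hw => crs_union h hZY hw)
          (fun h => h (Or.inl Finset.subset_union_right))
        have e : chiVec Y = chiVec (Y ∩ Z) + chiVec (Y ∪ Z) - chiVec Z := by
          funext s
          by_cases hy : s ∈ Y <;> by_cases hz : s ∈ Z <;> simp [chiVec, hy, hz]
        rw [e]
        exact Submodule.sub_mem _ (Submodule.add_mem _ a1 a2) hZs
      have diff : Y \ Z ∈ Tp ∪ Tb → Z \ Y ∈ Tp ∪ Tb →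
          chiVec Y ∈ Submodule.span ℝ (chiVec '' L) := by
        intro h1 h2
        have a1 := step _ h1 (fun W h hw => crs_sdiff h hZY hw)
          (fun h => h (Or.inr (Or.inr Finset.disjoint_sdiff)))
        have a2 := step _ h2 (fun W h hw => crs_sdiff2 h hZY hw)
          (fun h => h (Or.inr (Or.inl Finset.sdiff_subset)))
        have e : chiVec Y = chiVec (Y \ Z) - chiVec (Z \ Y) + chiVec Z := by
          funext s
          by_cases hy : s ∈ Y <;> by_cases hz : s ∈ Z <;> simp [chiVec, hy, hz]
        rw [e]
        exact Submodule.add_mem _ (Submodule.sub_mem _ a1 a2) hZs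
      rcases hY with hY | hY <;> rcases hLsub hZ with hZ' | hZ'
      · exact same (Or.inl (hpp Y Z hY hZ').1) (Or.inl (hpp Y Z hY hZ').2)
      · exact diff (Or.inl (hbp Z Y hZ' hY).2) (Or.inr (hbp Z Y hZ' hY).1)
      · exact diff (Or.inr (hbp Y Z hY hZ').1) (Or.inl (hbp Y Z hY hZ').2)
      · exact same (Or.inr (hbb Y Z hY hZ').1) (Or.inr (hbb Y Z hY hZ').2)
    · by_contra hns
      have hYL : Y ∉ L := fun h => hns (Submodule.subset_span ⟨Y, h, rfl⟩)
      apply hLmax Y hY hYL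
      have hc : ∀ W ∈ L, W ⊆ Y ∨ Y ⊆ W ∨ Disjoint W Y := by
        intro W hW
        by_contra h
        exact hex ⟨W, hW, h⟩
      refine ⟨?_, ?_⟩
      · rintro A (hA | rfl) C (hC | rfl)
        · exact hL.1 A hA C hC
        · exact hc A hA
        · rcases hc C hC with h | h | h
          · exact Or.inr (Or.inl h)
          · exact Or.inl h
          · exact Or.inr (Or.inr h.symm)
        · exact Or.inl (Finset.Subset.refl _)
      · have h0 : LinearIndepOn ℝ (chiVec : Finset S → S → ℝ) L := hL.2
        have h1 : LinearIndepOn ℝ (chiVec : Finset S → S → ℝ) (L ∪ {Y}) := by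
          rw [Set.union_singleton]
          exact (linearIndepOn_insert hYL).2 ⟨h0, hns⟩
        exact h1
  apply le_antisymm
  · exact Submodule.span_mono (Set.image_mono hLsub)
  · rw [Submodule.span_le]
    rintro _ ⟨Y, hY, rfl⟩
    exact key _ Y hY rfl
end

section
/- Let S be a finite set, p : 2^S → ℝ a supermodular set function, and x ∈ ℝ^S with p(Y) ≤ x(Y) for all Y ⊆ S. If R, T ⊆ S satisfy x(R) = p(R) and x(T) = p(T), then also x(R ∪ T) = p(R ∪ T) and x(R ∩ T) = p(R ∩ T); that is, the collection of p-tight sets is closed under union and intersection. -/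
/-- The family of `p`-tight sets of a supermodular function is closed under union and
intersection (uncrossing step, Case 1 in the proof of Claim 7): if `p(Y) ≤ x(Y)` for all
`Y ⊆ S` and `R`, `T` are `p`-tight, then so are `R ∪ T` and `R ∩ T`. -/
theorem supermodular_tight_uncrossing
    {S : Type*} [Fintype S] [DecidableEq S]
    (p : Finset S → ℝ)
    (hsuper : ∀ X Y : Finset S, p X + p Y ≤ p (X ∩ Y) + p (X ∪ Y))
    (x : S → ℝ)
    (hxp : ∀ Y : Finset S, p Y ≤ ∑ s ∈ Y, x s)
    (R T : Finset S)
    (hR : ∑ s ∈ R, x s = p R) (hT : ∑ s ∈ T, x s = p T) :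
    ∑ s ∈ R ∪ T, x s = p (R ∪ T) ∧ ∑ s ∈ R ∩ T, x s = p (R ∩ T) := by
  have h1 := hsuper R T
  have h2 := hxp (R ∪ T)
  have h3 := hxp (R ∩ T)
  have h4 := Finset.sum_union_inter (s₁ := R) (s₂ := T) (f := x)
  constructor <;> linarith
end

section
/- Let S be a finite set, let p, b : 2^S → ℝ be set functions satisfying the cross-inequality b(X) − p(Y) ≥ b(X∖Y) − p(Y∖X) for all X,Y ⊆ S, and let x ∈ ℝ^S with p(Y) ≤ x(Y) ≤ b(Y) for all Y ⊆ S. If R, T ⊆ S satisfy x(R) = p(R) (R is p-tight) and x(T) = b(T) (T is b-tight), then x(T∖R) = b(T∖R) and x(R∖T) = p(R∖T); that is, T∖R is b-tight and R∖T is p-tight. -/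
/-- Uncrossing a `p`-tight set with a `b`-tight set (Case 2 in the proof of Claim 7):
if `p` and `b` satisfy the cross-inequality, `p(Y) ≤ x(Y) ≤ b(Y)` for all `Y ⊆ S`,
`R` is `p`-tight and `T` is `b`-tight, then `T \ R` is `b`-tight and `R \ T` is `p`-tight. -/
theorem cross_inequality_tight_uncrossing
    {S : Type*} [Fintype S] [DecidableEq S]
    (p b : Finset S → ℝ)
    (hcross : ∀ X Y : Finset S, b (X \ Y) - p (Y \ X) ≤ b X - p Y)
    (x : S → ℝ)
    (hxp : ∀ Y : Finset S, p Y ≤ ∑ s ∈ Y, x s)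
    (hxb : ∀ Y : Finset S, ∑ s ∈ Y, x s ≤ b Y)
    (R T : Finset S)
    (hR : ∑ s ∈ R, x s = p R) (hT : ∑ s ∈ T, x s = b T) :
    ∑ s ∈ T \ R, x s = b (T \ R) ∧ ∑ s ∈ R \ T, x s = p (R \ T) := by
  have h1 := Finset.sum_inter_add_sum_sdiff T R x
  have h2 := Finset.sum_inter_add_sum_sdiff R T x
  rw [Finset.inter_comm R T] at h2
  have h3 := hcross T R
  have h4 := hxb (T \ R)
  have h5 := hxp (R \ T)
  constructor <;> linarith
end

section
/- Let S be a finite set and 𝓛 a laminar family of subsets of S whose characteristic vectors {χ_Z : Z ∈ 𝓛} are linearly independent over ℝ. Let x ∈ ℝ^S with 0 < x(s) < 1 for every s ∈ S, and suppose x(Z) ∈ ℤ for every Z ∈ 𝓛. Then for every U ∈ 𝓛, the set U − ⋃_{W ∈ 𝓛^max(U)} W is nonempty and contains at least 2 elements, where 𝓛^max(U) denotes the maximal members of 𝓛 properly contained in U. -/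
/-- The maximal members of `L` properly contained in `U`:
`𝓛^max(U) = { Y ∈ 𝓛 : Y ⊊ U, ¬∃ Y' ∈ 𝓛, Y ⊊ Y' ⊊ U }`. -/
def maxMembers {S : Type*} [DecidableEq S] (L : Finset (Finset S)) (U : Finset S) :
    Finset (Finset S) :=
  L.filter (fun Y => Y ⊂ U ∧ ∀ Y' ∈ L, Y ⊂ Y' → ¬ Y' ⊂ U)

/-- Key counting step in the token-redistribution argument of Theorem 1: if `𝓛` is a
laminar family with linearly independent characteristic vectors, `0 < x(s) < 1` for every
`s ∈ S`, and `x(Z)` is an integer for every `Z ∈ 𝓛`, then for every `U ∈ 𝓛` the set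
`U \ ⋃_{W ∈ 𝓛^max(U)} W` is nonempty and has at least two elements. -/
theorem laminar_counting_step
    {S : Type*} [Fintype S] [DecidableEq S]
    (L : Finset (Finset S))
    (hlam : ∀ X ∈ L, ∀ Y ∈ L, X ⊆ Y ∨ Y ⊆ X ∨ Disjoint X Y)
    (hind : LinearIndependent ℝ (fun Z : L => chiVec (Z : Finset S)))
    (x : S → ℝ)
    (hx0 : ∀ s : S, 0 < x s) (hx1 : ∀ s : S, x s < 1)
    (hint : ∀ Z ∈ L, ∃ k : ℤ, ∑ s ∈ Z, x s = (k : ℝ))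
    (U : Finset S) (hU : U ∈ L) :
    (U \ (maxMembers L U).sup id).Nonempty ∧ 2 ≤ (U \ (maxMembers L U).sup id).card := by
  set M := maxMembers L U with hM
  have hMm : ∀ Y ∈ M, Y ∈ L ∧ Y ⊂ U ∧ ∀ Y' ∈ L, Y ⊂ Y' → ¬ Y' ⊂ U := by
    intro Y hY
    simpa [hM, maxMembers] using hY
  have hdisj : ∀ X ∈ M, ∀ Y ∈ M, X ≠ Y → Disjoint X Y := by
    intro X hX Y hY hne
    obtain ⟨hXL, hXU, hXm⟩ := hMm X hX
    obtain ⟨hYL, hYU, hYm⟩ := hMm Y hY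
    rcases hlam X hXL Y hYL with h | h | h
    · exact absurd hYU (hXm Y hYL (lt_of_le_of_ne h hne))
    · exact absurd hXU (hYm X hXL (lt_of_le_of_ne h hne.symm))
    · exact h
  have hpd : Set.PairwiseDisjoint (M : Set (Finset S)) id := by
    intro X hX Y hY hne
    exact hdisj X hX Y hY hne
  have hsub : M.sup id ⊆ U := by
    apply Finset.sup_le
    intro Y hY
    exact (hMm Y hY).2.1.1
  have hsum : ∀ f : S → ℝ, ∑ s ∈ M.sup id, f s = ∑ W ∈ M, ∑ s ∈ W, f s := by
    intro f
    rw [Finset.sup_eq_biUnion, Finset.sum_biUnion hpd]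
    rfl
  have hne : (U \ M.sup id).Nonempty := by
    rw [Finset.nonempty_iff_ne_empty]
    intro he
    have hUeq : U = M.sup id := le_antisymm (Finset.sdiff_eq_empty_iff_subset.1 he) hsub
    have hchi : chiVec U = ∑ W ∈ M, chiVec W := by
      funext s
      have h := hsum (fun t => if s = t then 1 else 0)
      rw [← hUeq] at h
      simp only [Finset.sum_ite_eq] at h
      simpa [chiVec, Finset.sum_apply] using h
    have hnot := hind.notMem_span_image (s := {Z : L | (Z : Finset S) ∈ M}) (x := ⟨U, hU⟩)
      (fun h => (hMm U h).2.1.ne rfl)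
    apply hnot
    show chiVec U ∈ _
    rw [hchi]
    apply Submodule.sum_mem
    intro W hW
    exact Submodule.subset_span ⟨⟨W, (hMm W hW).1⟩, hW, rfl⟩
  refine ⟨hne, ?_⟩
  by_contra hlt
  have hc : (U \ M.sup id).card = 1 := by
    have := hne.card_pos
    omega
  obtain ⟨a, ha⟩ := Finset.card_eq_one.1 hc
  have h1 : ∑ s ∈ U \ M.sup id, x s + ∑ s ∈ M.sup id, x s = ∑ s ∈ U, x s :=
    Finset.sum_sdiff hsub
  rw [ha, Finset.sum_singleton, hsum] at h1
  obtain ⟨k, hk⟩ := hint U hU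
  have h2 : ∃ m : ℤ, ∑ W ∈ M, ∑ s ∈ W, x s = (m : ℝ) := by
    choose! g hg using hint
    refine ⟨∑ W ∈ M, g W, ?_⟩
    push_cast
    exact Finset.sum_congr rfl fun W hW => hg W (hMm W hW).1
  obtain ⟨m, hm⟩ := h2
  rw [hk, hm] at h1
  have e0 := hx0 a
  have e1 := hx1 a
  have l1 : (m : ℝ) < k := by linarith
  have l2 : (k : ℝ) < m + 1 := by linarith
  norm_cast at l1 l2
  omega
end

section
/- Let G = (V,E) be a finite complete undirected graph whose edge set contains a self-loop at every vertex, let r : V → ℤ≥1, and set r̂ = r(V) − |V| + 1 where r(V) = Σ_{v∈V} r(v). Define b : 2^E → ℤ by b(F) = |V(F)| − comp(F) + r̂ for F ≠ ∅ and b(∅) = 0, where V(F) is the set of vertices covered by F and comp(F) is the number of connected components of the graph (V(F), F). Then b is a polymatroid function: b(∅) = 0, b is monotone non-decreasing, and b is submodular (b(X) + b(Y) ≥ b(X∩Y) + b(X∪Y) for all X,Y ⊆ E). -/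
/- The complete undirected graph with a self-loop at every vertex of the finite vertex
type `V` is modelled by taking the edge set `E` to be all of `Sym2 V` (diagonal elements
of `Sym2 V` are the self-loops). -/

/-- `V(F)`: the set of vertices covered by the edge set `F`. -/
def coveredVerts {V : Type*} [Fintype V] [DecidableEq V] (F : Finset (Sym2 V)) : Set V :=
  {v | ∃ e ∈ F, v ∈ e}

/-- `comp(F)`: the number of connected components of the graph `(V(F), F)`
(self-loops create no adjacencies, so a vertex covered only by a loop forms its own
component). -/
noncomputable def numComp {V : Type*} [Fintype V] [DecidableEq V]
    (F : Finset (Sym2 V)) : ℕ :=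
  ((SimpleGraph.fromEdgeSet (↑F : Set (Sym2 V))).connectedComponentMk '' coveredVerts F).ncard

/-- The border function `b(F) = |V(F)| - comp(F) + r̂` for `F ≠ ∅`, and `b(∅) = 0`. -/
noncomputable def borderB {V : Type*} [Fintype V] [DecidableEq V]
    (rhat : ℤ) (F : Finset (Sym2 V)) : ℤ :=
  if F = ∅ then 0 else ((coveredVerts F).ncard : ℤ) - (numComp F : ℤ) + rhat

open SimpleGraph in
lemma bb_iso {V : Type*} [Fintype V] [DecidableEq V] (F : Finset (Sym2 V)) {u v : V}
    (hu : u ∉ coveredVerts F)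
    (h : (fromEdgeSet (↑F : Set (Sym2 V))).connectedComponentMk u =
      (fromEdgeSet (↑F : Set (Sym2 V))).connectedComponentMk v) : u = v := by
  obtain ⟨p⟩ := ConnectedComponent.exact h
  cases p with
  | nil => rfl
  | cons hadj q =>
    rw [fromEdgeSet_adj] at hadj
    exact absurd ⟨_, by simpa using hadj.1, by simp⟩ hu

/-- number of components of the spanning graph -/
noncomputable def bbC {V : Type*} (F : Finset (Sym2 V)) : ℕ :=
  Nat.card (SimpleGraph.fromEdgeSet (↑F : Set (Sym2 V))).ConnectedComponent

open SimpleGraph in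
lemma bb_count {V : Type*} [Fintype V] [DecidableEq V] (F : Finset (Sym2 V)) :
    numComp F + Nat.card V = bbC F + (coveredVerts F).ncard := by
  have : Finite (fromEdgeSet (↑F : Set (Sym2 V))).ConnectedComponent :=
    Quot.finite _
  set mk := (fromEdgeSet (↑F : Set (Sym2 V))).connectedComponentMk with hmk
  have h1 : (mk '' (coveredVerts F)ᶜ).ncard = ((coveredVerts F)ᶜ).ncard :=
    Set.ncard_image_of_injOn (fun u hu v _ h => bb_iso F hu h)
  have h2 : mk '' coveredVerts F ∪ mk '' (coveredVerts F)ᶜ = Set.univ := by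
    rw [← Set.image_union, Set.union_compl_self, Set.image_univ]
    exact Set.range_eq_univ.2 Quot.mk_surjective
  have h3 : Disjoint (mk '' coveredVerts F) (mk '' (coveredVerts F)ᶜ) := by
    rw [Set.disjoint_left]
    rintro _ ⟨u, hu, rfl⟩ ⟨v, hv, h⟩
    exact hv (bb_iso F hv h ▸ hu)
  have h4 := Set.ncard_union_eq h3 (Set.toFinite _) (Set.toFinite _)
  rw [h2, Set.ncard_univ, h1] at h4
  have h5 := Set.ncard_add_ncard_compl (coveredVerts F)
  have h6 : numComp F = (mk '' coveredVerts F).ncard := rfl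
  unfold bbC
  omega

/-- functions constant along edges -/
def bbW {V : Type*} (F : Finset (Sym2 V)) : Submodule ℚ (V → ℚ) where
  carrier := {f | ∀ u v, s(u, v) ∈ F → f u = f v}
  add_mem' := by
    intro f g hf hg u v h
    simp [hf u v h, hg u v h]
  zero_mem' := by simp
  smul_mem' := by
    intro c f hf u v h
    simp [hf u v h]

open SimpleGraph in
lemma bb_finrank {V : Type*} [Fintype V] (F : Finset (Sym2 V)) :
    Module.finrank ℚ (bbW F) = bbC F := by
  have : Finite (fromEdgeSet (↑F : Set (Sym2 V))).ConnectedComponent :=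
    Quot.finite _
  have := Fintype.ofFinite (fromEdgeSet (↑F : Set (Sym2 V))).ConnectedComponent
  set mk := (fromEdgeSet (↑F : Set (Sym2 V))).connectedComponentMk with hmk
  have hr : bbW F = LinearMap.range (LinearMap.funLeft ℚ ℚ mk) := by
    ext f
    constructor
    · intro hf
      have key : ∀ u v, (p : (fromEdgeSet (↑F : Set (Sym2 V))).Walk u v) → f u = f v := by
        intro u v p
        induction p with
        | nil => rfl
        | cons hadj q ih =>
          rw [fromEdgeSet_adj] at hadj
          exact (hf _ _ (by simpa using hadj.1)).trans ih
      refine ⟨fun c => c.lift f (fun u v p _ => key u v p), ?_⟩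
      ext v
      rfl
    · rintro ⟨g, rfl⟩ u v h
      by_cases huv : u = v
      · rw [huv]
      · have hadj : (fromEdgeSet (↑F : Set (Sym2 V))).Adj u v := by
          rw [fromEdgeSet_adj]
          exact ⟨by simpa using h, huv⟩
        have : mk u = mk v := ConnectedComponent.sound hadj.reachable
        simp [LinearMap.funLeft_apply, this]
  rw [hr, LinearMap.finrank_range_of_inj
    (LinearMap.funLeft_injective_of_surjective ℚ ℚ mk Quot.mk_surjective),
    Module.finrank_fintype_fun_eq_card, bbC, Nat.card_eq_fintype_card]

lemma bb_anti {V : Type*} {X Y : Finset (Sym2 V)} (h : X ⊆ Y) : bbW Y ≤ bbW X :=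
  fun _ hf u v huv => hf u v (h huv)

lemma bb_mono {V : Type*} [Fintype V] {X Y : Finset (Sym2 V)} (h : X ⊆ Y) :
    bbC Y ≤ bbC X := by
  rw [← bb_finrank, ← bb_finrank]
  exact Submodule.finrank_mono (bb_anti h)

lemma bb_sub {V : Type*} [Fintype V] [DecidableEq V] (X Y : Finset (Sym2 V)) :
    bbC X + bbC Y ≤ bbC (X ∩ Y) + bbC (X ∪ Y) := by
  simp only [← bb_finrank]
  rw [← Submodule.finrank_sup_add_finrank_inf_eq]
  refine add_le_add (Submodule.finrank_mono
    (sup_le (bb_anti Finset.inter_subset_left) (bb_anti Finset.inter_subset_right)))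
    (Submodule.finrank_mono ?_)
  rintro f ⟨hx, hy⟩ u v h
  rcases Finset.mem_union.1 h with h | h
  · exact hx u v h
  · exact hy u v h

lemma bb_eq {V : Type*} [Fintype V] [DecidableEq V] (rhat : ℤ) (F : Finset (Sym2 V)) :
    borderB rhat F = if F = ∅ then 0 else (Nat.card V : ℤ) - bbC F + rhat := by
  have := bb_count F
  unfold borderB
  split_ifs
  · rfl
  · omega

lemma bb_le {V : Type*} [Fintype V] (F : Finset (Sym2 V)) : bbC F ≤ Nat.card V :=
  Nat.card_le_card_of_surjective _ Quot.mk_surjective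

/-- **Lemma 8.** With `r : V → ℤ`, `r(v) ≥ 1`, and `r̂ = r(V) - |V| + 1`, the function
`b(F) = |V(F)| - comp(F) + r̂` (for `F ≠ ∅`, with `b(∅) = 0`) is a polymatroid function:
it vanishes on `∅`, is monotone non-decreasing and submodular. -/
theorem borderB_is_polymatroid_function
    {V : Type*} [Fintype V] [DecidableEq V]
    (r : V → ℤ) (hr : ∀ v, 1 ≤ r v)
    (rhat : ℤ) (hrhat : rhat = (∑ v : V, r v) - (Fintype.card V : ℤ) + 1) :
    borderB rhat (∅ : Finset (Sym2 V)) = 0 ∧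
    (∀ X Y : Finset (Sym2 V), X ⊆ Y → borderB rhat X ≤ borderB rhat Y) ∧
    (∀ X Y : Finset (Sym2 V),
      borderB rhat (X ∩ Y) + borderB rhat (X ∪ Y) ≤ borderB rhat X + borderB rhat Y) := by
  have h0 : 0 ≤ rhat := by
    have : (Fintype.card V : ℤ) ≤ ∑ v : V, r v := by
      have := Finset.sum_le_sum (s := Finset.univ) (fun v _ => hr v)
      simpa using this
    omega
  refine ⟨by simp [borderB], ?_, ?_⟩
  · intro X Y h
    have h1 := bb_mono h
    have h2 := bb_le Y
    rw [bb_eq, bb_eq]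
    split_ifs with hX hY hY
    · rfl
    · omega
    · subst hY
      exact absurd (Finset.subset_empty.1 h) hX
    · omega
  · intro X Y
    by_cases hX : X = ∅
    · subst hX
      simp [borderB]
    by_cases hY : Y = ∅
    · subst hY
      simp [borderB]
    have h1 := bb_sub X Y
    have h2 := bb_le (X ∩ Y)
    have hU : X ∪ Y ≠ ∅ := fun h => hX (Finset.union_eq_empty.1 h).1
    simp only [bb_eq, hX, hY, hU, if_false]
    split_ifs <;> omega
end

section
/- Let G = (V,E) be a finite complete undirected graph whose edge set contains a self-loop at every vertex, let r : V → ℤ≥1, set r̂ = r(V) − |V| + 1, and define b : 2^E → ℤ by b(F) = |V(F)| − comp(F) + r̂ for F ≠ ∅ and b(∅) = 0. Let B = { x ∈ ℤ^E_{≥0} : x(E) = r(V) and the support supp(x) = {e : x(e) ≠ 0} is a connected subgraph of G (spanning all of V) }, and let B(b) = { x ∈ ℝ^E : x(Y) ≤ b(Y) for every Y ⊆ E, x(E) = b(E) } be the base polymatroid of b. Then B = B(b) ∩ ℤ^E_{≥0}: the nonnegative integral vectors with total value r(V) and connected support are exactly the integral elements of B(b). -/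
/-- `supp(x)` is a connected subgraph of `G` spanning all of `V`: every cut of `V` is
crossed by some edge of the support of `x`. -/
def ConnSupp {V : Type*} [Fintype V] [DecidableEq V] (x : Sym2 V → ℤ) : Prop :=
  ∀ A : Finset V, A.Nonempty → A ≠ Finset.univ → ∃ u ∈ A, ∃ w, w ∉ A ∧ x s(u, w) ≠ 0


section Helpers
open SimpleGraph

lemma aux_numComp {V : Type*} [Fintype V] [DecidableEq V] (Y : Finset (Sym2 V)) :
    Fintype.card V + numComp Y ≤
      Nat.card (fromEdgeSet (Y : Set (Sym2 V))).ConnectedComponent + (coveredVerts Y).ncard := by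
  classical
  set G := fromEdgeSet (Y : Set (Sym2 V)) with hG
  have hiso : ∀ u v, u ∉ coveredVerts Y → G.Reachable u v → u = v := by
    intro u v hu h
    obtain ⟨p⟩ := h
    cases p with
    | nil => rfl
    | cons h p =>
      rw [hG, fromEdgeSet_adj] at h
      exact absurd ⟨_, h.1, Sym2.mem_mk_left _ _⟩ hu
  have h1 : (G.connectedComponentMk '' (coveredVerts Y)ᶜ).ncard = (coveredVerts Y)ᶜ.ncard := by
    apply Set.ncard_image_of_injOn
    intro u hu v hv h
    exact hiso u v hu (ConnectedComponent.exact h)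
  have hd : Disjoint (G.connectedComponentMk '' coveredVerts Y)
      (G.connectedComponentMk '' (coveredVerts Y)ᶜ) := by
    rw [Set.disjoint_left]
    rintro _ ⟨u, hu, rfl⟩ ⟨v, hv, h⟩
    have := hiso v u hv (ConnectedComponent.exact h)
    exact hv (this ▸ hu)
  have h2 := Set.ncard_union_eq hd (Set.toFinite _) (Set.toFinite _)
  have h3 := Set.ncard_le_card (G.connectedComponentMk '' coveredVerts Y ∪
      G.connectedComponentMk '' (coveredVerts Y)ᶜ)
  have h4 := Set.ncard_add_ncard_compl (coveredVerts Y)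
  rw [Nat.card_eq_fintype_card] at h4
  have h5 : numComp Y = (G.connectedComponentMk '' coveredVerts Y).ncard := rfl
  omega

lemma aux_conn {V : Type*} [Fintype V] [DecidableEq V] [Nonempty V] (x : Sym2 V → ℤ)
    (h : ConnSupp x) (Y S : Finset (Sym2 V)) (hS : ∀ e, x e ≠ 0 → e ∉ Y → e ∈ S) :
    Nat.card (fromEdgeSet (Y : Set (Sym2 V))).ConnectedComponent ≤ S.card + 1 := by
  classical
  set G := fromEdgeSet (Y : Set (Sym2 V)) with hG
  let H : SimpleGraph G.ConnectedComponent :=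
    fromEdgeSet (Sym2.map G.connectedComponentMk '' (S : Set (Sym2 V)))
  have key : ∀ u0 v, H.Reachable (G.connectedComponentMk u0) (G.connectedComponentMk v) := by
    intro u0
    by_contra! hc
    obtain ⟨v, hv⟩ := hc
    obtain ⟨u, hu, w, hw, hxe⟩ := h (Finset.univ.filter fun v =>
      H.Reachable (G.connectedComponentMk u0) (G.connectedComponentMk v))
      ⟨u0, by simp⟩ (fun he => hv (by
        have := Finset.mem_univ v
        rw [← he] at this
        simpa using this))
    simp only [Finset.mem_filter, Finset.mem_univ, true_and] at hu hw
    apply hw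
    by_cases heq : G.connectedComponentMk u = G.connectedComponentMk w
    · rwa [← heq]
    · refine hu.trans (Adj.reachable ?_)
      rw [fromEdgeSet_adj]
      refine ⟨⟨s(u, w), hS _ hxe fun hY => heq ?_, rfl⟩, heq⟩
      apply ConnectedComponent.sound
      by_cases huw : u = w
      · rw [huw]
      · exact Adj.reachable (by rw [hG, fromEdgeSet_adj]; exact ⟨hY, huw⟩)
  have hconn : H.Connected := by
    haveI : Nonempty G.ConnectedComponent := ⟨G.connectedComponentMk (Classical.arbitrary V)⟩
    refine ⟨?_⟩
    intro a b
    induction a using ConnectedComponent.ind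
    induction b using ConnectedComponent.ind
    exact key _ _
  have h1 := hconn.card_vert_le_card_edgeSet_add_one
  have h2 : H.edgeSet.ncard ≤ S.card := by
    calc H.edgeSet.ncard ≤ (Sym2.map G.connectedComponentMk '' (S : Set (Sym2 V))).ncard := by
          apply Set.ncard_le_ncard _ (Set.toFinite _)
          simp only [H, edgeSet_fromEdgeSet]
          exact Set.diff_subset
      _ ≤ (S : Set (Sym2 V)).ncard := Set.ncard_image_le (Set.toFinite _)
      _ = S.card := Set.ncard_coe_finset S
  rw [Set.ncard_def, Set.encard] at h2
  have h3 : Nat.card H.edgeSet ≤ S.card := h2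
  omega

lemma aux_covered {V : Type*} [Fintype V] [DecidableEq V] (Y : Finset (Sym2 V))
    (h : ∀ v, s(v, v) ∈ Y) : coveredVerts Y = Set.univ := by
  ext v
  simp only [Set.mem_univ, iff_true]
  exact ⟨_, h v, by simp⟩

lemma aux_univ {V : Type*} [Fintype V] [DecidableEq V] [Nonempty V] (rhat : ℤ) :
    borderB rhat (Finset.univ : Finset (Sym2 V)) = Fintype.card V - 1 + rhat := by
  have hne : (Finset.univ : Finset (Sym2 V)) ≠ ∅ := by
    obtain ⟨v⟩ := ‹Nonempty V›
    exact Finset.ne_empty_of_mem (Finset.mem_univ s(v, v))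
  have h1 : numComp (Finset.univ : Finset (Sym2 V)) = 1 := by
    unfold numComp
    rw [Set.ncard_eq_one]
    obtain ⟨v⟩ := ‹Nonempty V›
    refine ⟨connectedComponentMk _ v, ?_⟩
    rw [aux_covered _ (by simp)]
    ext c
    simp only [Set.image_univ, Set.mem_range, Set.mem_singleton_iff]
    constructor
    · rintro ⟨w, rfl⟩
      apply ConnectedComponent.sound
      by_cases hwv : w = v
      · rw [hwv]
      · exact Adj.reachable (by rw [fromEdgeSet_adj]; simp [hwv])
    · rintro rfl
      exact ⟨v, rfl⟩
  rw [borderB, if_neg hne, h1, aux_covered _ (by simp), Set.ncard_univ, Nat.card_eq_fintype_card]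
  simp

lemma aux_cut {V : Type*} [Fintype V] [DecidableEq V] (A : Finset V) (Y : Finset (Sym2 V))
    (hY : ∀ u w, s(u, w) ∈ Y ↔ (u ∈ A ↔ w ∈ A)) (hA : A.Nonempty) (hA' : A ≠ Finset.univ) :
    2 ≤ numComp Y := by
  obtain ⟨a, ha⟩ := hA
  obtain ⟨b, hb⟩ : ∃ b, b ∉ A := by
    by_contra! hc
    exact hA' (Finset.eq_univ_iff_forall.2 hc)
  unfold numComp
  rw [aux_covered _ (by simp [hY])]
  set G := fromEdgeSet (Y : Set (Sym2 V)) with hG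
  have hw : ∀ u v, G.Walk u v → (u ∈ A ↔ v ∈ A) := by
    intro u v p
    induction p with
    | nil => rfl
    | cons h p ih =>
      rw [hG, fromEdgeSet_adj] at h
      exact ((hY _ _).1 (by exact_mod_cast h.1)).trans ih
  have : 1 < (G.connectedComponentMk '' Set.univ).ncard := by
    rw [Set.one_lt_ncard (Set.toFinite _)]
    refine ⟨_, ⟨a, trivial, rfl⟩, _, ⟨b, trivial, rfl⟩, fun h => ?_⟩
    obtain ⟨p⟩ := ConnectedComponent.exact h
    exact hb ((hw _ _ p).1 ha)
  exact this

end Helpers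

/-- **Lemma 9.** The nonnegative integral vectors `x` on the edges with total value
`x(E) = r(V)` and connected support are exactly the integral elements of the base
polymatroid `B(b)` of the border function `b(F) = |V(F)| - comp(F) + r̂`. -/
theorem connected_multigraphs_eq_base_polymatroid
    {V : Type*} [Fintype V] [DecidableEq V]
    (r : V → ℤ) (hr : ∀ v, 1 ≤ r v)
    (rhat : ℤ) (hrhat : rhat = (∑ v : V, r v) - (Fintype.card V : ℤ) + 1)
    (x : Sym2 V → ℤ) (hx : ∀ e, 0 ≤ x e) :
    ((∑ e : Sym2 V, x e = ∑ v : V, r v) ∧ ConnSupp x) ↔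
    ((∀ Y : Finset (Sym2 V), ∑ e ∈ Y, x e ≤ borderB rhat Y) ∧
      ∑ e : Sym2 V, x e = borderB rhat (Finset.univ : Finset (Sym2 V))) := by
  classical
  rcases isEmpty_or_nonempty V with hV | hV
  · have hE : IsEmpty (Sym2 V) := ⟨fun e => by
      induction e with | _ a b => exact hV.elim a⟩
    constructor
    · intro _
      refine ⟨fun Y => ?_, ?_⟩
      · rw [Finset.eq_empty_of_isEmpty Y]; simp [borderB]
      · rw [Finset.univ_eq_empty]; simp [borderB]
    · intro _
      refine ⟨by simp, ?_⟩
      rintro A ⟨a, _⟩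
      exact hV.elim a
  rw [aux_univ]
  constructor
  · rintro ⟨hsum, hc⟩
    refine ⟨fun Y => ?_, by rw [hsum, hrhat]; ring⟩
    by_cases hY : Y = ∅
    · subst hY; simp [borderB]
    rw [borderB, if_neg hY]
    have h1 := aux_numComp Y
    have h2 := aux_conn x hc Y (Yᶜ.filter fun e => x e ≠ 0) (by
      intro e he hn; simp [he, hn])
    have h3 : ((Yᶜ.filter fun e => x e ≠ 0).card : ℤ) ≤ ∑ e ∈ Yᶜ, x e := by
      rw [Finset.card_filter]
      push_cast
      apply Finset.sum_le_sum
      intro e _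
      have := hx e
      split_ifs <;> omega
    have h4 := Finset.sum_add_sum_compl Y x
    omega
  · rintro ⟨hle, hsum⟩
    refine ⟨by rw [hsum, hrhat]; ring, ?_⟩
    intro A hA hA'
    by_contra! hcut
    let Y : Finset (Sym2 V) := Finset.univ.filter fun e => (∀ v ∈ e, v ∈ A) ∨ (∀ v ∈ e, v ∉ A)
    have hY : ∀ u w, s(u, w) ∈ Y ↔ (u ∈ A ↔ w ∈ A) := by
      intro u w
      simp only [Y, Finset.mem_filter, Finset.mem_univ, true_and, Sym2.mem_iff, forall_eq_or_imp,
        forall_eq]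
      tauto
    have h2 := aux_cut A Y hY hA hA'
    have hYne : Y ≠ ∅ := by
      obtain ⟨a, _⟩ := hA
      exact Finset.ne_empty_of_mem ((hY a a).2 Iff.rfl)
    have h3 := hle Y
    rw [borderB, if_neg hYne, aux_covered _ (by simp [hY]), Set.ncard_univ,
      Nat.card_eq_fintype_card] at h3
    have h4 : ∑ e ∈ Y, x e = ∑ e, x e := by
      apply Finset.sum_subset (Finset.subset_univ _)
      intro e _ he
      induction e with
      | _ u w =>
        rw [hY] at he
        by_cases hu : u ∈ A
        · exact hcut u hu w (by tauto)
        · rw [Sym2.eq_swap]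
          exact hcut w (by tauto) u hu
    omega
end

section
/- Let G = (V,E) be a finite complete undirected graph with a self-loop at every vertex, let c : E → ℝ≥0 satisfy the triangle inequality (including c(vv) ≤ 2·min_{u∈V} c(uv) for loops), and let r : V → ℤ≥1. Then for every z ∈ ℤ^E_{≥0} with d_z(v) = 2·r(v) for all v ∈ V, there exists z' ∈ ℤ^E_{≥0} with d_{z'}(v) = 2·(r(v) − 1) for all v ∈ V and c(z') ≤ c(z). Consequently, the optimal transportation costs satisfy c(TP*_{c,r-1}) ≤ c(TP*_{c,r}). -/
/- The complete undirected graph with a self-loop at every vertex of the finite vertex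
type `V` is modelled by taking the edge set `E` to be all of `Sym2 V`. -/

/-- `d_z(v)`: the sum of the `z`-values on the edges incident to `v`, with the self-loop
at `v` counted twice. -/
def degSum {V : Type*} [Fintype V] [DecidableEq V] (z : Sym2 V → ℤ) (v : V) : ℤ :=
  (∑ u : V, z s(v, u)) + z s(v, v)

/-- `c(z) = ∑_e c(e) z(e)`: the cost of the multigraph represented by `z`. -/
def tourCost {V : Type*} [Fintype V] [DecidableEq V] (c : Sym2 V → ℝ) (z : Sym2 V → ℤ) :
    ℝ :=
  ∑ e : Sym2 V, c e * (z e : ℝ)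

lemma degSum_add' {V : Type*} [Fintype V] [DecidableEq V] (y z : Sym2 V → ℤ) (v : V) :
    degSum (y + z) v = degSum y v + degSum z v := by
  simp only [degSum, Pi.add_apply, Finset.sum_add_distrib]; ring

lemma degSum_sub' {V : Type*} [Fintype V] [DecidableEq V] (y z : Sym2 V → ℤ) (v : V) :
    degSum (y - z) v = degSum y v - degSum z v := by
  simp only [degSum, Pi.sub_apply, Finset.sum_sub_distrib]; ring

lemma tourCost_add' {V : Type*} [Fintype V] [DecidableEq V] (c : Sym2 V → ℝ)
    (y z : Sym2 V → ℤ) : tourCost c (y + z) = tourCost c y + tourCost c z := by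
  simp only [tourCost, Pi.add_apply, Int.cast_add, mul_add, Finset.sum_add_distrib]

lemma tourCost_sub' {V : Type*} [Fintype V] [DecidableEq V] (c : Sym2 V → ℝ)
    (y z : Sym2 V → ℤ) : tourCost c (y - z) = tourCost c y - tourCost c z := by
  simp only [tourCost, Pi.sub_apply, Int.cast_sub, mul_sub, Finset.sum_sub_distrib]

lemma tourCost_single' {V : Type*} [Fintype V] [DecidableEq V] (c : Sym2 V → ℝ)
    (e : Sym2 V) : tourCost c (Pi.single e 1) = c e := by
  simp [tourCost, Pi.single_apply]

lemma degSum_single' {V : Type*} [Fintype V] [DecidableEq V] (a b x : V) :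
    degSum (Pi.single s(a, b) 1) x = (if x = a then 1 else 0) + (if x = b then 1 else 0) := by
  by_cases hab : a = b
  · subst hab
    by_cases hx : x = a
    · subst hx
      simp [degSum, Pi.single_apply]
    · simp [degSum, Pi.single_apply, hx]
  · by_cases hx : x = a
    · subst hx
      simp [degSum, Pi.single_apply, hab]
    · by_cases hb : x = b
      · subst hb
        simp [degSum, Pi.single_apply, hx]
      · simp [degSum, Pi.single_apply, hx, hb]

lemma exists_edge' {V : Type*} [Fintype V] [DecidableEq V] (z : Sym2 V → ℤ) (v : V)
    (h : 1 ≤ degSum z v) : ∃ u, 1 ≤ z s(v, u) := by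
  by_contra! hn
  have h1 : ∑ u : V, z s(v, u) ≤ 0 := Finset.sum_nonpos fun u _ => by have := hn u; omega
  have h2 := hn v
  unfold degSum at h
  omega

lemma sub_single_nonneg' {V : Type*} [DecidableEq V] (z : Sym2 V → ℤ)
    (hz : ∀ e, 0 ≤ z e) (e : Sym2 V) (he : 1 ≤ z e) :
    ∀ f, 0 ≤ (z - Pi.single e 1 : Sym2 V → ℤ) f := by
  intro f
  have := hz f
  by_cases hf : f = e
  · subst hf; simp; omega
  · simp [hf, this]

lemma reduce_one' {V : Type*} [Fintype V] [DecidableEq V]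
    (c : Sym2 V → ℝ) (hc0 : ∀ e, 0 ≤ c e)
    (htri : ∀ u v w : V, c s(u, w) ≤ c s(u, v) + c s(v, w))
    (z : Sym2 V → ℤ) (hz : ∀ e, 0 ≤ z e) (v : V) (hv : 2 ≤ degSum z v) :
    ∃ z' : Sym2 V → ℤ, (∀ e, 0 ≤ z' e) ∧
      (∀ x, degSum z' x = degSum z x - if x = v then 2 else 0) ∧
      tourCost c z' ≤ tourCost c z := by
  obtain ⟨u, hu⟩ := exists_edge' z v (by omega)
  have h1 := sub_single_nonneg' z hz _ hu
  by_cases huv : u = v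
  · subst huv
    refine ⟨_, h1, fun x => ?_, ?_⟩
    · rw [degSum_sub', degSum_single']; split_ifs <;> ring
    · rw [tourCost_sub', tourCost_single']; linarith [hc0 s(u, u)]
  · obtain ⟨w, hw⟩ := exists_edge' (z - Pi.single s(v, u) 1) v (by
      rw [degSum_sub', degSum_single', if_pos rfl, if_neg (Ne.symm huv)]; omega)
    have h2 := sub_single_nonneg' _ h1 _ hw
    refine ⟨z - Pi.single s(v, u) 1 - Pi.single s(v, w) 1 + Pi.single s(u, w) 1,
      fun e => ?_, fun x => ?_, ?_⟩
    · have h3 : (0 : ℤ) ≤ (Pi.single s(u, w) 1 : Sym2 V → ℤ) e := by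
        rw [Pi.single_apply]; split_ifs <;> norm_num
      exact add_nonneg (h2 e) h3
    · rw [degSum_add', degSum_sub', degSum_sub', degSum_single', degSum_single', degSum_single']
      by_cases hx : x = v
      · simp only [hx, if_true]; ring
      · simp only [hx, if_false]; ring
    · rw [tourCost_add', tourCost_sub', tourCost_sub', tourCost_single', tourCost_single',
        tourCost_single']
      have := htri u v w
      rw [Sym2.eq_swap (a := u) (b := v)] at this
      linarith

lemma reduce_set' {V : Type*} [Fintype V] [DecidableEq V]
    (c : Sym2 V → ℝ) (hc0 : ∀ e, 0 ≤ c e)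
    (htri : ∀ u v w : V, c s(u, w) ≤ c s(u, v) + c s(v, w))
    (r : V → ℤ) (hr : ∀ v, 1 ≤ r v)
    (z : Sym2 V → ℤ) (hz : ∀ e, 0 ≤ z e) (hd : ∀ v, degSum z v = 2 * r v) (S : Finset V) :
    ∃ z' : Sym2 V → ℤ, (∀ e, 0 ≤ z' e) ∧
      (∀ x, degSum z' x = 2 * r x - if x ∈ S then 2 else 0) ∧
      tourCost c z' ≤ tourCost c z := by
  induction S using Finset.induction_on with
  | empty => exact ⟨z, hz, fun x => by simp [hd], le_refl _⟩
  | insert a S ha ih =>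
    obtain ⟨y, hy, hyd, hyc⟩ := ih
    obtain ⟨z', h1, h2, h3⟩ := reduce_one' c hc0 htri y hy a (by
      rw [hyd, if_neg ha]; have := hr a; omega)
    refine ⟨z', h1, fun x => ?_, h3.trans hyc⟩
    rw [h2, hyd]
    by_cases hx : x = a
    · subst hx; simp [ha]
    · simp [hx]

/-- Under the triangle inequality, any nonnegative integral edge vector with degrees
`2 r(v)` can be turned into one with degrees `2 (r(v) - 1)` of no larger cost.
Consequently, the optimal transportation costs satisfy
`c(TP*_{c,r-1}) ≤ c(TP*_{c,r})`. -/
theorem reduce_transportation_degrees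
    {V : Type*} [Fintype V] [DecidableEq V]
    (c : Sym2 V → ℝ) (hc0 : ∀ e, 0 ≤ c e)
    (htri : ∀ u v w : V, c s(u, w) ≤ c s(u, v) + c s(v, w))
    (r : V → ℤ) (hr : ∀ v, 1 ≤ r v) :
    (∀ z : Sym2 V → ℤ, (∀ e, 0 ≤ z e) → (∀ v, degSum z v = 2 * r v) →
      ∃ z' : Sym2 V → ℤ, (∀ e, 0 ≤ z' e) ∧ (∀ v, degSum z' v = 2 * (r v - 1)) ∧
        tourCost c z' ≤ tourCost c z) ∧
    (∀ TPr1 TPr : Sym2 V → ℤ,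
      (∀ e, 0 ≤ TPr1 e) → (∀ v, degSum TPr1 v = 2 * (r v - 1)) →
      (∀ z : Sym2 V → ℤ, (∀ e, 0 ≤ z e) → (∀ v, degSum z v = 2 * (r v - 1)) →
        tourCost c TPr1 ≤ tourCost c z) →
      (∀ e, 0 ≤ TPr e) → (∀ v, degSum TPr v = 2 * r v) →
      tourCost c TPr1 ≤ tourCost c TPr) := by
  have key : ∀ z : Sym2 V → ℤ, (∀ e, 0 ≤ z e) → (∀ v, degSum z v = 2 * r v) →
      ∃ z' : Sym2 V → ℤ, (∀ e, 0 ≤ z' e) ∧ (∀ v, degSum z' v = 2 * (r v - 1)) ∧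
        tourCost c z' ≤ tourCost c z := by
    intro z hz hd
    obtain ⟨z', h1, h2, h3⟩ := reduce_set' c hc0 htri r hr z hz hd Finset.univ
    refine ⟨z', h1, fun v => ?_, h3⟩
    rw [h2, if_pos (Finset.mem_univ v)]; ring
  refine ⟨key, fun A B _ _ hA hB hBd => ?_⟩
  obtain ⟨z', h1, h2, h3⟩ := key B hB hBd
  exact (hA z' h1 h2).trans h3
end
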